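/- Enlarging a hierarchical constellation does not decrease the low-priority BICM-SIC rate: for every ρ ≥ 1 and noise variance σ_L² > 0, r_L(ρμ, σ_L²) ≥ r_L(μ, σ_L²), where ρμ is the constellation obtained by multiplying every point of μ by ρ; that is, Σ_{j=1}^{m_L} I(B_L^j ; ρZ + N_L | B_H) ≥ Σ_{j=1}^{m_L} I(B_L^j ; Z + N_L | B_H). -/

import Mathlib

open MeasureTheory ProbabilityTheory
open scoped ENNReal NNReal

/-- The centered complex Gaussian law of variance `v`: real and imaginary parts are independent
centered real Gaussians of variance `v/2`. -/
noncomputable def complexGaussian (v : ℝ≥0) : Measure ℂ :=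
  ((gaussianReal 0 (v / 2)).prod (gaussianReal 0 (v / 2))).map
    (fun p => (p.1 : ℂ) + (p.2 : ℂ) * Complex.I)

/-- Kullback-Leibler divergence in base 2 (in bits). -/
noncomputable def klDiv2 {α : Type*} [MeasurableSpace α] (μ ν : Measure α) : ℝ :=
  ∫ x, Real.logb 2 ((μ.rnDeriv ν x).toReal) ∂μ

/-- Mutual information (base 2) of two random variables: KL divergence of the joint law from
the product of the marginal laws. -/
noncomputable def mutualInfo {Ω α β : Type*} [MeasurableSpace Ω] [MeasurableSpace α]
    [MeasurableSpace β] (P : Measure Ω) (X : Ω → α) (Y : Ω → β) : ℝ :=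
  klDiv2 (P.map fun ω => (X ω, Y ω)) ((P.map X).prod (P.map Y))

/-- Conditional mutual information given a finite-valued random variable `B`:
`I(X;Y|B) = ∑ b, P(B = b) · I(X;Y)` computed under the conditional measure `P[|B = b]`. -/
noncomputable def condMutualInfo {Ω α β γ : Type*} [MeasurableSpace Ω] [MeasurableSpace α]
    [MeasurableSpace β] [MeasurableSpace γ] [Fintype γ] (P : Measure Ω) (X : Ω → α) (Y : Ω → β)
    (B : Ω → γ) : ℝ :=
  ∑ b : γ, (P (B ⁻¹' {b})).toReal * mutualInfo (P[|B ⁻¹' {b}]) X Y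

instance isProbabilityMeasure_complexGaussian (v : ℝ≥0) :
    IsProbabilityMeasure (complexGaussian v) := by
  unfold complexGaussian
  exact Measure.isProbabilityMeasure_map (by fun_prop)

lemma charFun_complexGaussian (v : ℝ≥0) (t : ℂ) :
    charFun (complexGaussian v) t = Complex.exp (-((v : ℂ) / 4 * ((t.re : ℂ) ^ 2 + (t.im : ℂ) ^ 2))) := by
  have h : charFun (complexGaussian v) t =
      charFun (gaussianReal 0 (v / 2)) t.re * charFun (gaussianReal 0 (v / 2)) t.im := by
    rw [charFun_apply, charFun_apply, charFun_apply, complexGaussian,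
      integral_map (by fun_prop) (by fun_prop), ← integral_prod_mul]
    congr 1
    ext p
    rw [← Complex.exp_add]
    congr 1
    simp [Complex.inner]
    ring
  rw [h, charFun_gaussianReal, charFun_gaussianReal, ← Complex.exp_add]
  congr 1
  push_cast
  ring

lemma complexGaussian_scale_add (v : ℝ≥0) (ρ : ℝ) (hρ : 1 ≤ ρ) :
    ∃ w : ℝ≥0, ((complexGaussian v).prod (complexGaussian w)).map
      (fun p => ((ρ⁻¹ : ℝ) : ℂ) * p.1 + p.2) = complexGaussian v := by
  have hc : ρ⁻¹ ^ 2 ≤ 1 := by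
    have h1 : ρ⁻¹ ≤ 1 := inv_le_one_of_one_le₀ hρ
    have h0 : 0 ≤ ρ⁻¹ := by positivity
    nlinarith
  generalize ρ⁻¹ = c at hc
  refine ⟨v * ⟨1 - c ^ 2, by linarith⟩, ?_⟩
  set w : ℝ≥0 := v * ⟨1 - c ^ 2, by linarith⟩ with hw
  have e : ((complexGaussian v).prod (complexGaussian w)).map
      (fun p => (c : ℂ) * p.1 + p.2) =
      ((complexGaussian v).map (fun z => c • z)) ∗ (complexGaussian w) := by
    rw [Measure.conv]
    conv_rhs => rw [← Measure.map_id (μ := complexGaussian w)]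
    rw [Measure.map_prod_map _ _ (by fun_prop) (by fun_prop), Measure.map_map (by fun_prop) (by fun_prop)]
    congr 1
  have : IsProbabilityMeasure ((complexGaussian v).map (fun z => c • z)) :=
    Measure.isProbabilityMeasure_map (by fun_prop)
  rw [e]
  apply Measure.ext_of_charFun
  ext t
  rw [charFun_conv, charFun_map_smul, charFun_complexGaussian, charFun_complexGaussian,
    charFun_complexGaussian, ← Complex.exp_add]
  congr 1
  have : (w : ℂ) = v * (1 - (c : ℂ) ^ 2) := by
    have : (w : ℝ) = v * (1 - c ^ 2) := by rw [hw]; rfl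
    exact_mod_cast congrArg (fun x : ℝ => (x : ℂ)) this
  rw [this]
  simp
  ring

lemma joint_le {Ω β : Type*} [MeasurableSpace Ω] [MeasurableSpace β] (Q : Measure Ω)
    [IsProbabilityMeasure Q] (X : Ω → Bool) (Y : Ω → β) (hX : Measurable X) (hY : Measurable Y) :
    ∃ C : ℝ≥0, Q.map (fun ω => (X ω, Y ω)) ≤ C • ((Q.map X).prod (Q.map Y)) := by
  set p : Bool → ℝ≥0∞ := fun x => (Q.map X) {x}
  have hp : ∀ x, p x ≠ ∞ := by
    intro x
    have : IsProbabilityMeasure (Q.map X) := Measure.isProbabilityMeasure_map hX.aemeasurable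
    exact measure_ne_top _ _
  set C : ℝ≥0 := ∑ x : Bool, (p x).toNNReal⁻¹
  refine ⟨C, ?_⟩
  have hC : ∀ x, p x ≠ 0 → 1 ≤ (C : ℝ≥0∞) * p x := by
    intro x hx
    have h0 : (p x).toNNReal ≠ 0 := by
      simp [ENNReal.toNNReal_eq_zero_iff, hx, hp x]
    have h1 : 1 ≤ C * (p x).toNNReal := by
      calc 1 = (p x).toNNReal⁻¹ * (p x).toNNReal := by rw [inv_mul_cancel₀ h0]
        _ ≤ _ := by
          gcongr
          exact Finset.single_le_sum (f := fun x => (p x).toNNReal⁻¹)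
            (fun i _ => by positivity) (Finset.mem_univ x)
    have h2 : p x = ((p x).toNNReal : ℝ≥0∞) := (ENNReal.coe_toNNReal (hp x)).symm
    rw [h2]
    exact_mod_cast h1
  have hPY : IsProbabilityMeasure (Q.map Y) := Measure.isProbabilityMeasure_map hY.aemeasurable
  have hPX : IsProbabilityMeasure (Q.map X) := Measure.isProbabilityMeasure_map hX.aemeasurable
  rw [Measure.le_iff]
  intro S hS
  rw [Measure.map_apply (hX.prodMk hY) hS]
  rw [Measure.smul_apply, Measure.prod_apply hS, lintegral_fintype, ENNReal.smul_def, smul_eq_mul,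
    Finset.mul_sum]
  have hsub : (fun ω => (X ω, Y ω)) ⁻¹' S ⊆
      ⋃ x ∈ (Finset.univ : Finset Bool), (X ⁻¹' {x} ∩ Y ⁻¹' (Prod.mk x ⁻¹' S)) := by
    intro ω hω
    simp only [Set.mem_iUnion]
    exact ⟨X ω, Finset.mem_univ _, rfl, hω⟩
  refine (measure_mono hsub).trans ((measure_biUnion_finset_le _ _).trans ?_)
  refine Finset.sum_le_sum fun x _ => ?_
  rw [Measure.map_apply hY (measurable_prodMk_left hS)]
  change _ ≤ (C : ℝ≥0∞) * (_ * p x)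
  by_cases hx : p x = 0
  · have : Q (X ⁻¹' {x}) = 0 := by
      rw [← Measure.map_apply hX (measurableSet_singleton x)]; exact hx
    rw [measure_mono_null Set.inter_subset_left this]
    exact zero_le
  · calc _ ≤ Q (Y ⁻¹' (Prod.mk x ⁻¹' S)) := measure_mono Set.inter_subset_right
      _ = 1 * Q (Y ⁻¹' (Prod.mk x ⁻¹' S)) := (one_mul _).symm
      _ ≤ ((C : ℝ≥0∞) * p x) * Q (Y ⁻¹' (Prod.mk x ⁻¹' S)) := by gcongr; exact hC x hx
      _ = _ := by ring

lemma klDiv_ne_top_of_le {α : Type*} [MeasurableSpace α] (μ ν : Measure α)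
    [IsFiniteMeasure μ] [IsFiniteMeasure ν] (C : ℝ≥0) (h : μ ≤ C • ν) :
    μ ≪ ν ∧ InformationTheory.klDiv μ ν ≠ ∞ := by
  have hac : μ ≪ ν := (Measure.absolutelyContinuous_of_le h).trans
    (Measure.smul_absolutelyContinuous)
  refine ⟨hac, InformationTheory.klDiv_ne_top hac ?_⟩
  rw [← InformationTheory.integrable_klFun_rnDeriv_iff hac]
  have hle : ∀ᵐ x ∂ν, μ.rnDeriv ν x ≤ C := by
    refine ae_le_of_forall_setLIntegral_le_of_sigmaFinite (Measure.measurable_rnDeriv _ _) ?_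
    intro s hs _
    refine (Measure.setLIntegral_rnDeriv_le _).trans ?_
    rw [setLIntegral_const]
    have := h s
    rwa [Measure.smul_apply, ENNReal.smul_def, smul_eq_mul] at this
  obtain ⟨M, hM⟩ := (isCompact_Icc (a := (0 : ℝ)) (b := C)).exists_bound_of_continuousOn
    (InformationTheory.continuous_klFun.continuousOn)
  refine Integrable.of_bound (C := M) ?_ ?_
  · exact (InformationTheory.measurable_klFun.comp
      (Measure.measurable_rnDeriv _ _).ennreal_toReal).aestronglyMeasurable
  · filter_upwards [hle] with x hx
    refine hM _ ⟨ENNReal.toReal_nonneg, ?_⟩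
    exact ENNReal.toReal_le_coe_of_le_coe hx

lemma mutualInfo_eq {Ω β : Type*} [MeasurableSpace Ω] [MeasurableSpace β] (Q : Measure Ω)
    [IsProbabilityMeasure Q] (X : Ω → Bool) (Y : Ω → β) (hX : Measurable X) (hY : Measurable Y) :
    InformationTheory.klDiv (Q.map fun ω => (X ω, Y ω)) ((Q.map X).prod (Q.map Y)) ≠ ∞ ∧
    mutualInfo Q X Y = (InformationTheory.klDiv (Q.map fun ω => (X ω, Y ω))
      ((Q.map X).prod (Q.map Y))).toReal / Real.log 2 := by
  have hPY : IsProbabilityMeasure (Q.map Y) := Measure.isProbabilityMeasure_map hY.aemeasurable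
  have hPX : IsProbabilityMeasure (Q.map X) := Measure.isProbabilityMeasure_map hX.aemeasurable
  have hJ : IsProbabilityMeasure (Q.map fun ω => (X ω, Y ω)) :=
    Measure.isProbabilityMeasure_map (hX.prodMk hY).aemeasurable
  obtain ⟨C, hC⟩ := joint_le Q X Y hX hY
  obtain ⟨hac, hfin⟩ := klDiv_ne_top_of_le _ _ C hC
  refine ⟨hfin, ?_⟩
  rw [InformationTheory.toReal_klDiv_of_measure_eq hac (by simp), mutualInfo, klDiv2,
    ← integral_div]
  rfl

lemma mutualInfo_scale {Ω : Type*} [MeasurableSpace Ω] (Q : Measure Ω)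
    [IsProbabilityMeasure Q] (X : Ω → Bool) (Z N : Ω → ℂ) (hX : Measurable X) (hZ : Measurable Z)
    (hN : Measurable N) (v : ℝ≥0)
    (hlaw : Q.map (fun ω => ((X ω, Z ω), N ω)) =
      (Q.map (fun ω => (X ω, Z ω))).prod (complexGaussian v))
    (ρ : ℝ) (hρ : 1 ≤ ρ) :
    mutualInfo Q X (fun ω => Z ω + N ω) ≤ mutualInfo Q X (fun ω => (ρ : ℂ) * Z ω + N ω) := by
  obtain ⟨w, hw⟩ := complexGaussian_scale_add v ρ hρ
  set γ := complexGaussian w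
  have hY : Measurable (fun ω => Z ω + N ω) := by fun_prop
  have hY' : Measurable (fun ω => (ρ : ℂ) * Z ω + N ω) := by fun_prop
  have hZN : IsProbabilityMeasure (Q.map (fun ω => (X ω, Z ω))) :=
    Measure.isProbabilityMeasure_map (by fun_prop)
  have hPY' : IsProbabilityMeasure (Q.map (fun ω => (ρ : ℂ) * Z ω + N ω)) :=
    Measure.isProbabilityMeasure_map hY'.aemeasurable
  have hPX : IsProbabilityMeasure (Q.map X) := Measure.isProbabilityMeasure_map hX.aemeasurable
  have hJ' : IsProbabilityMeasure (Q.map (fun ω => (X ω, (ρ : ℂ) * Z ω + N ω))) :=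
    Measure.isProbabilityMeasure_map (by fun_prop)
  obtain ⟨-, h1⟩ := mutualInfo_eq Q X _ hX hY
  obtain ⟨h2, h3⟩ := mutualInfo_eq Q X _ hX hY'
  rw [h1, h3]
  have hρ0 : (ρ : ℂ) ≠ 0 := by
    have : ρ ≠ 0 := by linarith
    exact_mod_cast this
  set c : ℂ := ((ρ⁻¹ : ℝ) : ℂ) with hc
  have hcρ : c * ρ = 1 := by rw [hc]; push_cast; exact inv_mul_cancel₀ hρ0
  set g : (Bool × ℂ) × ℂ → Bool × ℂ := fun p => (p.1.1, c * p.1.2 + p.2) with hg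
  have hgm : Measurable g := by fun_prop
  have eJ : ((Q.map (fun ω => (X ω, (ρ : ℂ) * Z ω + N ω))).prod γ).map g =
      Q.map (fun ω => (X ω, Z ω + N ω)) := by
    have a1 : Q.map (fun ω => (X ω, Z ω + N ω)) =
        ((Q.map (fun ω => (X ω, Z ω))).prod (complexGaussian v)).map
          (fun p => (p.1.1, p.1.2 + p.2)) := by
      rw [← hlaw, Measure.map_map (by fun_prop) (by fun_prop)]; rfl
    have a2 : Q.map (fun ω => (X ω, (ρ : ℂ) * Z ω + N ω)) =
        ((Q.map (fun ω => (X ω, Z ω))).prod (complexGaussian v)).map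
          (fun p => (p.1.1, (ρ : ℂ) * p.1.2 + p.2)) := by
      rw [← hlaw, Measure.map_map (by fun_prop) (by fun_prop)]; rfl
    rw [a1, a2]
    generalize Q.map (fun ω => (X ω, Z ω)) = L at *
    conv_rhs => rw [← hw, ← Measure.map_id (μ := L)]
    conv_lhs => rw [← Measure.map_id (μ := γ)]
    rw [Measure.map_prod_map _ _ (by fun_prop) (by fun_prop),
      Measure.map_prod_map _ _ (by fun_prop) (by fun_prop),
      Measure.map_map (by fun_prop) (by fun_prop), Measure.map_map (by fun_prop) (by fun_prop),
      ← Measure.prodAssoc_prod, Measure.map_map (by fun_prop) (by fun_prop)]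
    congr 1
    ext p
    · rfl
    · simp [hg, Function.comp, MeasurableEquiv.prodAssoc]
      linear_combination p.1.1.2 * hcρ
  have eR : (((Q.map X).prod (Q.map (fun ω => (ρ : ℂ) * Z ω + N ω))).prod γ).map g =
      (Q.map X).prod (Q.map (fun ω => Z ω + N ω)) := by
    have b1 : Q.map (fun ω => Z ω + N ω) =
        ((Q.map (fun ω => (ρ : ℂ) * Z ω + N ω)).prod γ).map (fun p => c * p.1 + p.2) := by
      have := congrArg (fun m => m.map Prod.snd) eJ
      rw [Measure.map_map (by fun_prop) (by fun_prop),
        Measure.map_map (by fun_prop) (by fun_prop)] at this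
      have b2 : Q.map (fun ω => (ρ : ℂ) * Z ω + N ω) =
        (Q.map (fun ω => (X ω, (ρ : ℂ) * Z ω + N ω))).map Prod.snd := by
        rw [Measure.map_map (by fun_prop) (by fun_prop)]; rfl
      rw [b2]
      conv_rhs => rw [← Measure.map_id (μ := γ)]
      rw [Measure.map_prod_map _ _ (by fun_prop) (by fun_prop),
        Measure.map_map (by fun_prop) (by fun_prop)]
      exact this.symm
    rw [b1]
    clear eJ b1 h1 h2 h3 hlaw
    generalize Q.map X = LX at *
    generalize Q.map (fun ω => (ρ : ℂ) * Z ω + N ω) = LY at *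
    conv_rhs => rw [← Measure.map_id (μ := LX)]
    rw [Measure.map_prod_map _ _ (by fun_prop) (by fun_prop),
      ← Measure.prodAssoc_prod, Measure.map_map (by fun_prop) (by fun_prop)]
    rfl
  have hle : InformationTheory.klDiv (Q.map fun ω => (X ω, Z ω + N ω))
        ((Q.map X).prod (Q.map fun ω => Z ω + N ω)) ≤
      InformationTheory.klDiv (Q.map fun ω => (X ω, (ρ : ℂ) * Z ω + N ω))
        ((Q.map X).prod (Q.map fun ω => (ρ : ℂ) * Z ω + N ω)) := by
    rw [← eJ, ← eR]
    refine (InformationTheory.klDiv_map_le _ _ hgm).trans ?_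
    rw [← Measure.compProd_const, ← Measure.compProd_const,
      InformationTheory.klDiv_compProd_left]
  have := ENNReal.toReal_mono h2 hle
  have hlog : 0 < Real.log 2 := Real.log_pos (by norm_num)
  gcongr

/-!
STATEMENT 7: Enlarging a hierarchical constellation does not decrease the low-priority BICM-SIC
rate: for every `ρ ≥ 1` and noise variance `σ_L² > 0`,
`∑ j, I(B_L^j ; ρZ + N_L | B_H) ≥ ∑ j, I(B_L^j ; Z + N_L | B_H)`.
-/
theorem hm_amplify_LP_rate
    {Ω : Type*} [MeasurableSpace Ω] (P : Measure Ω) [IsProbabilityMeasure P]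
    (mH mL : ℕ) (hmH : 0 < mH) (hmL : 0 < mL)
    (μc : (Fin mH → Bool) × (Fin mL → Bool) → ℂ)
    (BH : Ω → Fin mH → Bool) (BL : Ω → Fin mL → Bool)
    (hBH : Measurable BH) (hBL : Measurable BL)
    (hUnif : P.map (fun ω => (BH ω, BL ω)) =
      (PMF.uniformOfFintype ((Fin mH → Bool) × (Fin mL → Bool))).toMeasure)
    (σL2 : ℝ≥0) (hσL2 : 0 < σL2)
    (NL : Ω → ℂ) (hNLMeas : Measurable NL)
    (lawNL : P.map NL = complexGaussian σL2)
    (hIndepNL : IndepFun (fun ω => (BH ω, BL ω)) NL P)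
    (ρ : ℝ) (hρ : 1 ≤ ρ) :
    ∑ j : Fin mL,
        condMutualInfo P (fun ω => BL ω j)
          (fun ω => (ρ : ℂ) * μc (BH ω, BL ω) + NL ω) BH ≥
      ∑ j : Fin mL,
        condMutualInfo P (fun ω => BL ω j)
          (fun ω => μc (BH ω, BL ω) + NL ω) BH := by
  simp only [ge_iff_le, condMutualInfo]
  refine Finset.sum_le_sum fun j _ => Finset.sum_le_sum fun b _ => ?_
  set s := BH ⁻¹' {b} with hs
  have hsm : MeasurableSet s := hBH (measurableSet_singleton b)
  by_cases h0 : P s = 0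
  · simp [h0]
  refine mul_le_mul_of_nonneg_left ?_ ENNReal.toReal_nonneg
  have hQ : IsProbabilityMeasure (P[|s]) := cond_isProbabilityMeasure h0
  have hU : Measurable (fun ω => (BH ω, BL ω)) := hBH.prodMk hBL
  have hμc : Measurable μc := measurable_of_finite _
  have hZ : Measurable (fun ω => μc (BH ω, BL ω)) := hμc.comp hU
  have hXZ : Measurable (fun ω => (BL ω j, μc (BH ω, BL ω))) :=
    ((measurable_pi_apply j).comp hBL).prodMk hZ
  refine mutualInfo_scale (P[|s]) (fun ω => BL ω j) (fun ω => μc (BH ω, BL ω)) NL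
    ((measurable_pi_apply j).comp hBL) hZ hNLMeas σL2 ?_ ρ hρ
  have hL : IsProbabilityMeasure ((P[|s]).map (fun ω => (BL ω j, μc (BH ω, BL ω)))) :=
    Measure.isProbabilityMeasure_map hXZ.aemeasurable
  symm
  refine Measure.prod_eq fun A B hA hB => ?_
  rw [Measure.map_apply (hXZ.prodMk hNLMeas) (hA.prod hB), Measure.map_apply hXZ hA,
    cond_apply hsm, cond_apply hsm, ← lawNL, Measure.map_apply hNLMeas hB, mul_assoc]
  congr 1
  have key := hIndepNL.measure_inter_preimage_eq_mul
    {u | u.1 = b ∧ (u.2 j, μc u) ∈ A} B (Set.toFinite _).measurableSet hB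
  rw [← show s ∩ (fun ω => (BL ω j, μc (BH ω, BL ω))) ⁻¹' A =
    (fun ω => (BH ω, BL ω)) ⁻¹' {u | u.1 = b ∧ (u.2 j, μc u) ∈ A} from rfl] at key
  rw [← key]
  congr 1
  ext ω
  simp only [Set.mem_inter_iff, Set.mem_preimage, Set.mem_prod]
  tauto
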